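/- arXiv:2007.12653 — 2 statements merged into one kernel-verified Lean document; each statement's English description precedes it below -/
import Mathlib

section
/- Let m ≥ 1 be an integer and λ a real number with λ > m. For every integer n ≥ λ, the Binomial(n, λ/n) upper tail at m is at least the Poisson(λ) upper tail at m: ∑_{j=m}^{n} (n choose j) (λ/n)^j (1-λ/n)^{n-j} ≥ 1 − ∑_{j=0}^{m-1} e^{-λ} λ^j / j!. -/
/-!
By the Poisson limit theorem it suffices that `P(Bin(n, lam / n) ≤ k)` increases with `n`. One step
from `n` to `n + 1` is interpolated by `X + Y`, where `X ~ Bin(n, p)` and `Y ~ Bernoulli(lam - n p)`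
are independent, so that the mean stays equal to `lam`: the value `p = lam / n` gives
`Bin(n, lam / n)` and `p = lam / (n + 1)` gives `Bin(n + 1, lam / (n + 1))`. With
`b(p) = P(X = k)`, the derivative of `P(X + Y ≤ k)` in `p` collapses to `((n + 1) p - lam) b'(p)`.
Its first factor is nonnegative for `p ≥ lam / (n + 1)`, and `b` decreases once `p` has passed its
mode `k / n`, which is at most `lam / (n + 1)`.
-/

open Filter Finset Polynomial Topology

section CommRing

variable (R : Type*) [CommRing R]

lemma bernsteinPolynomial_succ_zero (n : ℕ) :
    bernsteinPolynomial R (n + 1) 0 = (1 - X) * bernsteinPolynomial R n 0 := by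
  simp [bernsteinPolynomial, pow_succ']

lemma bernsteinPolynomial_succ_succ (n k : ℕ) :
    bernsteinPolynomial R (n + 1) (k + 1) =
      X * bernsteinPolynomial R n k + (1 - X) * bernsteinPolynomial R n (k + 1) := by
  rcases lt_or_ge k n with hkn | hnk
  · have hpow : (1 - X : R[X]) ^ (n - k) = (1 - X) * (1 - X) ^ (n - (k + 1)) := by
      rw [← pow_succ', show n - (k + 1) + 1 = n - k by lia]
    simp only [bernsteinPolynomial, Nat.choose_succ_succ, Nat.add_sub_add_right, Nat.cast_add, hpow]
    ring
  · rw [bernsteinPolynomial.eq_zero_of_lt R (Nat.lt_succ_of_le hnk)]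
    simp only [bernsteinPolynomial, Nat.choose_succ_succ, Nat.add_sub_add_right,
      Nat.choose_eq_zero_of_lt (Nat.lt_succ_of_le hnk), Nat.add_zero]
    ring

lemma X_mul_derivative_bernsteinPolynomial (n k : ℕ) :
    X * derivative (bernsteinPolynomial R n k) =
      (n : R[X]) * (bernsteinPolynomial R n k - bernsteinPolynomial R (n - 1) k) := by
  rcases n with _ | n
  · rcases k with _ | k <;> simp [bernsteinPolynomial]
  rcases k with _ | k
  · rw [bernsteinPolynomial.derivative_zero, bernsteinPolynomial_succ_zero, Nat.add_sub_cancel]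
    ring
  · rw [bernsteinPolynomial.derivative_succ, bernsteinPolynomial_succ_succ, Nat.add_sub_cancel]
    ring

lemma X_mul_one_sub_X_mul_derivative_bernsteinPolynomial (n k : ℕ) :
    X * (1 - X) * derivative (bernsteinPolynomial R n k) =
      ((k : R[X]) - (n : R[X]) * X) * bernsteinPolynomial R n k := by
  rcases lt_or_ge n k with hnk | hkn
  · simp [bernsteinPolynomial.eq_zero_of_lt R hnk]
  obtain ⟨d, rfl⟩ := Nat.exists_eq_add_of_le hkn
  have mul_pow_pred (x : R[X]) (i : ℕ) : x * (i * x ^ (i - 1)) = i * x ^ i := by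
    rcases i with _ | i
    · simp
    · rw [Nat.add_sub_cancel, pow_succ]; ring
  simp only [bernsteinPolynomial, Nat.add_sub_cancel_left, derivative_mul, derivative_natCast,
    derivative_pow, derivative_sub, derivative_one, derivative_X, map_natCast, Nat.cast_add]
  linear_combination
    ((k + d).choose k : R[X]) * (1 - X) ^ d * (1 - X) * mul_pow_pred X k -
      ((k + d).choose k : R[X]) * X ^ k * X * mul_pow_pred (1 - X) d

/-- The distribution function `P(X ≤ k)` of `X ~ Bin(n, p)`, as a polynomial in `p`. -/
noncomputable def binomialCDF (n k : ℕ) : R[X] :=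
  ∑ j ∈ range (k + 1), bernsteinPolynomial R n j

lemma binomialCDF_zero (n : ℕ) : binomialCDF R n 0 = bernsteinPolynomial R n 0 := by
  simp [binomialCDF]

lemma binomialCDF_succ (n k : ℕ) :
    binomialCDF R n (k + 1) = binomialCDF R n k + bernsteinPolynomial R n (k + 1) :=
  sum_range_succ _ _

lemma binomialCDF_succ_left (n k : ℕ) :
    binomialCDF R (n + 1) k = binomialCDF R n k - X * bernsteinPolynomial R n k := by
  induction k with
  | zero => rw [binomialCDF_zero, binomialCDF_zero, bernsteinPolynomial_succ_zero]; ring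
  | succ k ih => rw [binomialCDF_succ, binomialCDF_succ, ih, bernsteinPolynomial_succ_succ]; ring

lemma derivative_binomialCDF (n k : ℕ) :
    derivative (binomialCDF R n k) = -n * bernsteinPolynomial R (n - 1) k := by
  induction k with
  | zero => rw [binomialCDF_zero, bernsteinPolynomial.derivative_zero]
  | succ k ih =>
    rw [binomialCDF_succ, derivative_add, ih, bernsteinPolynomial.derivative_succ]
    ring

lemma sum_Icc_bernsteinPolynomial (m n : ℕ) :
    ∑ j ∈ Icc m n, bernsteinPolynomial R n j = 1 - ∑ j ∈ range m, bernsteinPolynomial R n j := by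
  rw [eq_sub_iff_add_eq', ← bernsteinPolynomial.sum R n]
  rcases le_total m (n + 1) with hmn | hnm
  · exact sum_range_add_sum_Ico _ hmn
  · rw [Icc_eq_empty_of_lt hnm, sum_empty, add_zero]
    exact eventually_constant_sum (fun _ hj ↦ bernsteinPolynomial.eq_zero_of_lt R hj) hnm

variable {R}

lemma binomial_tail_eq_one_sub (m n : ℕ) (p : R) :
    ∑ j ∈ Icc m n, (n.choose j : R) * p ^ j * (1 - p) ^ (n - j) =
      1 - ∑ j ∈ range m, (bernsteinPolynomial R n j).eval p := by
  have htail := congr_arg (eval p) (sum_Icc_bernsteinPolynomial R m n)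
  simpa [eval_finsetSum, bernsteinPolynomial] using htail

/-- The distribution function `P(X + Y ≤ k)`, as a polynomial in `p`, for independent
`X ~ Bin(n, p)` and `Y ~ Bernoulli(lam - n p)`; it interpolates between `Bin(n, lam / n)` and
`Bin(n + 1, lam / (n + 1))`. It is encoded by conditioning on `Y`, as
`P(X ≤ k) - P(Y = 1) P(X = k)`. -/
noncomputable def mixedBinomialCDF (n k : ℕ) (lam : R) : R[X] :=
  binomialCDF R n k - (C lam - (n : R[X]) * X) * bernsteinPolynomial R n k

lemma derivative_mixedBinomialCDF (n k : ℕ) (lam : R) :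
    derivative (mixedBinomialCDF n k lam) =
      (((n : R[X]) + 1) * X - C lam) * derivative (bernsteinPolynomial R n k) := by
  simp only [mixedBinomialCDF, derivative_sub, derivative_mul, derivative_binomialCDF, derivative_C,
    derivative_natCast, derivative_X]
  linear_combination -X_mul_derivative_bernsteinPolynomial R n k

end CommRing

section Field

variable {K : Type*} [Field K]

lemma eval_mixedBinomialCDF_div {n : ℕ} (hn : (n : K) ≠ 0) (k : ℕ) (lam : K) :
    (mixedBinomialCDF n k lam).eval (lam / n) = (binomialCDF K n k).eval (lam / n) := by
  simp [mixedBinomialCDF, mul_div_cancel₀ lam hn]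

lemma eval_mixedBinomialCDF_div_succ {n : ℕ} (hn : (n + 1 : K) ≠ 0) (k : ℕ) (lam : K) :
    (mixedBinomialCDF n k lam).eval (lam / (n + 1)) =
      (binomialCDF K (n + 1) k).eval (lam / (n + 1)) := by
  have hq : lam - n * (lam / (n + 1)) = lam / (n + 1) := by field_simp; ring
  simp [mixedBinomialCDF, binomialCDF_succ_left, hq]

end Field

section Ordered

variable {R : Type*} [CommRing R]

lemma eval_bernsteinPolynomial_nonneg [PartialOrder R] [IsOrderedRing R] (n k : ℕ) {p : R}
    (hp0 : 0 ≤ p) (hp1 : p ≤ 1) :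
    0 ≤ (bernsteinPolynomial R n k).eval p := by
  simp only [bernsteinPolynomial, eval_mul, eval_pow, eval_sub, eval_natCast, eval_X, eval_one]
  exact mul_nonneg (mul_nonneg (Nat.cast_nonneg _) (pow_nonneg hp0 _))
    (pow_nonneg (sub_nonneg.2 hp1) _)

lemma eval_derivative_bernsteinPolynomial_nonpos [LinearOrder R] [IsStrictOrderedRing R]
    {n k : ℕ} {p : R} (hp0 : 0 < p) (hp1 : p < 1) (hk : k ≤ n * p) :
    (derivative (bernsteinPolynomial R n k)).eval p ≤ 0 := by
  have hderiv := congr_arg (eval p) (X_mul_one_sub_X_mul_derivative_bernsteinPolynomial R n k)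
  simp only [eval_mul, eval_sub, eval_X, eval_one, eval_natCast] at hderiv
  refine nonpos_of_mul_nonpos_right ?_ (mul_pos hp0 (sub_pos.2 hp1))
  rw [hderiv]
  exact mul_nonpos_of_nonpos_of_nonneg (sub_nonpos.2 hk)
    (eval_bernsteinPolynomial_nonneg n k hp0.le hp1.le)

end Ordered

lemma antitoneOn_eval_mixedBinomialCDF {n k : ℕ} {lam : ℝ} (hlam : 0 ≤ lam)
    (hk : (k : ℝ) * (n + 1) ≤ n * lam) :
    AntitoneOn (fun p ↦ (mixedBinomialCDF n k lam).eval p) (Set.Icc (lam / (n + 1)) 1) := by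
  have hn : (0 : ℝ) < n + 1 := by positivity
  refine antitoneOn_of_deriv_nonpos (convex_Icc _ _) (Polynomial.continuousOn _)
    (Polynomial.differentiableOn _) fun p hp ↦ ?_
  obtain ⟨hlow, hp1⟩ : lam / (n + 1) < p ∧ p < 1 := by rwa [interior_Icc] at hp
  have hp0 : 0 < p := (by positivity : 0 ≤ lam / (n + 1)).trans_lt hlow
  have hmean : lam ≤ (n + 1) * p := ((div_lt_iff₀' hn).1 hlow).le
  have hmode : (k : ℝ) ≤ n * p := by
    refine le_of_mul_le_mul_right ?_ hn
    calc (k : ℝ) * (n + 1) ≤ n * lam := hk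
      _ ≤ n * ((n + 1) * p) := by gcongr
      _ = n * p * (n + 1) := by ring
  rw [Polynomial.deriv, derivative_mixedBinomialCDF]
  simp only [eval_mul, eval_sub, eval_add, eval_natCast, eval_one, eval_X, eval_C]
  exact mul_nonpos_of_nonneg_of_nonpos (sub_nonneg.2 hmean)
    (eval_derivative_bernsteinPolynomial_nonpos hp0 hp1 hmode)

lemma eval_binomialCDF_div_le_succ {n k : ℕ} {lam : ℝ} (hlam : 0 < lam) (hn : lam ≤ n)
    (hk : (k : ℝ) * (n + 1) ≤ n * lam) :
    (binomialCDF ℝ n k).eval (lam / n) ≤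
      (binomialCDF ℝ (n + 1) k).eval (lam / (n + 1 : ℕ)) := by
  have hn0 : (0 : ℝ) < n := hlam.trans_le hn
  have hle : lam / (n + 1) ≤ lam / n := by gcongr; linarith
  have hle_one : lam / n ≤ 1 := (div_le_one hn0).2 hn
  rw [Nat.cast_succ, ← eval_mixedBinomialCDF_div hn0.ne',
    ← eval_mixedBinomialCDF_div_succ (by positivity)]
  exact antitoneOn_eval_mixedBinomialCDF hlam.le hk ⟨le_rfl, hle.trans hle_one⟩ ⟨hle, hle_one⟩ hle

lemma eval_binomialCDF_div_le_of_le {n N k : ℕ} {lam : ℝ} (hlam : 0 < lam) (hn : lam ≤ n)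
    (hk : (k : ℝ) * (n + 1) ≤ n * lam) (hnN : n ≤ N) :
    (binomialCDF ℝ n k).eval (lam / n) ≤ (binomialCDF ℝ N k).eval (lam / N) := by
  induction N, hnN using Nat.le_induction with
  | base => exact le_rfl
  | succ N hnN ih =>
    have hnN' : (n : ℝ) ≤ N := by exact_mod_cast hnN
    have hklam : (k : ℝ) ≤ lam := by
      refine le_of_mul_le_mul_right (hk.trans ?_) (by positivity : (0 : ℝ) < n + 1)
      linarith
    have hkN : (k : ℝ) * (N + 1) ≤ N * lam := by
      linarith [mul_le_mul_of_nonneg_right hnN' (sub_nonneg.2 hklam)]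
    exact ih.trans (eval_binomialCDF_div_le_succ hlam (hn.trans hnN') hkN)

lemma tendsto_eval_binomialCDF_div (k : ℕ) (lam : ℝ) :
    Tendsto (fun n : ℕ ↦ (binomialCDF ℝ n k).eval (lam / n)) atTop
      (𝓝 (∑ j ∈ range (k + 1), Real.exp (-lam) * lam ^ j / j.factorial)) := by
  have hmean : Tendsto (fun n : ℕ ↦ (n : ℝ) * (lam / n)) atTop (𝓝 lam) := by
    refine tendsto_const_nhds.congr' ?_
    filter_upwards [eventually_ne_atTop 0] with n hn
    rw [mul_div_cancel₀ lam (Nat.cast_ne_zero.2 hn)]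
  simp only [binomialCDF, bernsteinPolynomial, eval_finsetSum, eval_mul, eval_pow, eval_sub,
    eval_natCast, eval_X, eval_one]
  exact tendsto_finsetSum _ fun j _ ↦
    ProbabilityTheory.tendsto_choose_mul_pow_of_tendsto_mul_atTop j hmean

lemma eval_binomialCDF_div_le_poisson {n k : ℕ} {lam : ℝ} (hlam : 0 < lam) (hn : lam ≤ n)
    (hk : (k : ℝ) * (n + 1) ≤ n * lam) :
    (binomialCDF ℝ n k).eval (lam / n) ≤
      ∑ j ∈ range (k + 1), Real.exp (-lam) * lam ^ j / j.factorial :=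
  ge_of_tendsto (tendsto_eval_binomialCDF_div k lam) <|
    (eventually_ge_atTop n).mono fun _ ↦ eval_binomialCDF_div_le_of_le hlam hn hk

/-- `hm` says that the mode `(m - 1) / n` of `p ↦ P(Bin(n, p) = m - 1)` is at most
`lam / (n + 1)`. -/
theorem binomial_tail_ge_poisson_tail_general (m : ℕ) (lam : ℝ) (hlam : 0 < lam) (n : ℕ)
    (hm : ((m : ℝ) - 1) * (n + 1) ≤ n * lam) (hn : lam ≤ (n : ℝ)) :
    1 - ∑ j ∈ Finset.range m, Real.exp (-lam) * lam ^ j / j.factorial ≤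
      ∑ j ∈ Finset.Icc m n, (n.choose j : ℝ) * (lam / n) ^ j * (1 - lam / n) ^ (n - j) := by
  rw [binomial_tail_eq_one_sub]
  rcases m with _ | k
  · simp
  · rw [Nat.cast_succ, add_sub_cancel_right] at hm
    rw [← eval_finsetSum]
    exact sub_le_sub_left (eval_binomialCDF_div_le_poisson hlam hn hm) 1

/-- For an integer `m ≥ 1`, a real `λ > m`, and an integer `n ≥ λ`,
the Binomial(n, λ/n) upper tail at `m` is at least the Poisson(λ) upper tail at `m`:
`∑_{j=m}^{n} (n choose j) (λ/n)^j (1-λ/n)^{n-j} ≥ 1 − ∑_{j=0}^{m-1} e^{-λ} λ^j / j!`. -/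
theorem binomial_tail_ge_poisson_tail (m : ℕ) (hm : 1 ≤ m) (lam : ℝ)
    (hlam : (m : ℝ) < lam) (n : ℕ) (hn : lam ≤ (n : ℝ)) :
    1 - ∑ j ∈ Finset.range m, Real.exp (-lam) * lam ^ j / j.factorial ≤
      ∑ j ∈ Finset.Icc m n, (n.choose j : ℝ) * (lam / n) ^ j * (1 - lam / n) ^ (n - j) := by
  have hmode : ((m : ℝ) - 1) * (n + 1) ≤ n * lam := by nlinarith
  exact binomial_tail_ge_poisson_tail_general m lam (m.cast_nonneg.trans_lt hlam) n hmode hn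
end

section
/- Let m ≥ 2 be an integer, let x_1, ..., x_n be independent Bernoulli random variables with means μ_1, ..., μ_n ∈ [0,1], and let y_1, ..., y_n be independent Bernoulli random variables with means (2/m)·μ_1, ..., (2/m)·μ_n. Then (1/2)·E[min(y_1 + ... + y_n, 2)] ≤ (1/m)·E[min(x_1 + ... + x_n, m)]. -/
/-!
We model a family of `n` independent Bernoulli random variables with means
`p : Fin n → ℝ` by their joint (product) distribution on `Fin n → Bool`:
the outcome `ω` has probability `∏ i, (if ω i then p i else 1 - p i)`.
-/

/-- number of successes in outcome `ω` -/
def bCount {n : ℕ} (ω : Fin n → Bool) : ℕ := ∑ i, if ω i then 1 else 0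

/-- joint probability of the outcome `ω` for independent Bernoulli variables
with means `p` -/
noncomputable def bernWeight {n : ℕ} (p : Fin n → ℝ) (ω : Fin n → Bool) : ℝ :=
  ∏ i, if ω i then p i else 1 - p i

/-- expectation of `g(x_1 + ⋯ + x_n)` for independent Bernoulli variables `x_i`
with means `p` -/
noncomputable def bernExp {n : ℕ} (p : Fin n → ℝ) (g : ℕ → ℝ) : ℝ :=
  ∑ ω : Fin n → Bool, bernWeight p ω * g (bCount ω)

/-!
Conditionally on `X = x_1 + ⋯ + x_n`, the sum `Y` of the variables with means `q * μ_i` is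
distributed as a binomial variable with parameters `X` and `q`: keep each success of `x`
independently with probability `q`. Hence `E[Y | X] = q * X`, and Jensen's inequality gives
`E[g(Y)] ≤ E[g(q * X)]` for every concave `g`. Apply this to `g(y) = min(y, q * b)`, for which
`g(q * x) = q * min(x, b)`.
-/

section

variable {n : ℕ} {p : Fin n → ℝ}

theorem bernWeight_nonneg (hp : ∀ i, p i ∈ Set.Icc 0 1) (ω : Fin n → Bool) :
    0 ≤ bernWeight p ω := by
  refine Finset.prod_nonneg fun i _ => ?_
  split_ifs
  · exact (hp i).1
  · exact sub_nonneg.2 (hp i).2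

theorem sum_bernWeight (p : Fin n → ℝ) : ∑ ω, bernWeight p ω = 1 := by
  calc ∑ ω, bernWeight p ω
      = ∏ i, ∑ b : Bool, if b then p i else 1 - p i := by
        simp only [bernWeight, Finset.prod_univ_sum, Fintype.piFinset_univ]
    _ = 1 := by simp

theorem bernExp_const (p : Fin n → ℝ) (a : ℝ) : bernExp p (fun _ => a) = a := by
  simp only [bernExp, ← Finset.sum_mul, sum_bernWeight, one_mul]

theorem bernExp_add (p : Fin n → ℝ) (f g : ℕ → ℝ) :
    bernExp p (fun c => f c + g c) = bernExp p f + bernExp p g := by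
  simp only [bernExp, mul_add, Finset.sum_add_distrib]

theorem bernExp_const_mul (p : Fin n → ℝ) (a : ℝ) (g : ℕ → ℝ) :
    bernExp p (fun c => a * g c) = a * bernExp p g := by
  simp only [bernExp, Finset.mul_sum, mul_left_comm]

theorem bernExp_mono (hp : ∀ i, p i ∈ Set.Icc 0 1) {f g : ℕ → ℝ} (hfg : ∀ c, f c ≤ g c) :
    bernExp p f ≤ bernExp p g :=
  Finset.sum_le_sum fun ω _ => mul_le_mul_of_nonneg_left (hfg _) (bernWeight_nonneg hp ω)

theorem bernExp_zero (p : Fin 0 → ℝ) (g : ℕ → ℝ) : bernExp p g = g 0 := by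
  simp [bernExp, bernWeight, bCount]

theorem bernExp_succ (p : Fin (n + 1) → ℝ) (g : ℕ → ℝ) :
    bernExp p g = p 0 * bernExp (fun i => p i.succ) (fun c => g (c + 1))
      + (1 - p 0) * bernExp (fun i => p i.succ) g := by
  simp only [bernExp, ← (Fin.consEquiv fun _ => Bool).sum_comp, Fintype.sum_prod_type,
    Fintype.sum_bool, Finset.mul_sum]
  simp [bernWeight, bCount, Fin.consEquiv, Fin.prod_univ_succ, Fin.sum_univ_succ, mul_assoc,
    add_comm]

theorem bernExp_natCast (p : Fin n → ℝ) : bernExp p (fun c => (c : ℝ)) = ∑ i, p i := by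
  induction n with
  | zero => simp [bernExp_zero]
  | succ n ih =>
    simp only [bernExp_succ, Nat.cast_add, Nat.cast_one, bernExp_add, bernExp_const, ih,
      Fin.sum_univ_succ]
    ring

theorem bernExp_le_of_concaveOn (hp : ∀ i, p i ∈ Set.Icc 0 1) {g : ℝ → ℝ}
    (hg : ConcaveOn ℝ (Set.Ici 0) g) : bernExp p (fun c => g c) ≤ g (∑ i, p i) := by
  rw [← bernExp_natCast p]
  exact hg.le_map_sum (fun ω _ => bernWeight_nonneg hp ω) (sum_bernWeight p)
    fun ω _ => Set.mem_Ici.2 (Nat.cast_nonneg (bCount ω))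

/-- The inner expectation is over a binomial variable with parameters `k` and `q`. -/
theorem bernExp_thinning (q : ℝ) (p : Fin n → ℝ) (g : ℕ → ℝ) :
    bernExp (fun i => q * p i) g = bernExp p (fun k => bernExp (fun _ : Fin k => q) g) := by
  induction n generalizing g with
  | zero => simp only [bernExp_zero]
  | succ n ih =>
    simp only [bernExp_succ, ih, bernExp_add, bernExp_const_mul]
    ring

theorem bernExp_thinning_le_of_concaveOn {q : ℝ} (hq : q ∈ Set.Icc 0 1)
    (hp : ∀ i, p i ∈ Set.Icc 0 1) {g : ℝ → ℝ} (hg : ConcaveOn ℝ (Set.Ici 0) g) :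
    bernExp (fun i => q * p i) (fun c => g c) ≤ bernExp p (fun c => g (q * c)) := by
  rw [bernExp_thinning]
  refine bernExp_mono hp fun k => ?_
  calc bernExp (fun _ : Fin k => q) (fun c => g c)
      ≤ g (∑ _ : Fin k, q) := bernExp_le_of_concaveOn (fun _ => hq) hg
    _ = g (q * k) := by simp [mul_comm]

theorem bernExp_thinning_min_le {q : ℝ} (hq : q ∈ Set.Icc 0 1) (hp : ∀ i, p i ∈ Set.Icc 0 1)
    (b : ℝ) :
    bernExp (fun i => q * p i) (fun c => min (c : ℝ) (q * b)) ≤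
      q * bernExp p (fun c => min (c : ℝ) b) := by
  have hconcave : ConcaveOn ℝ (Set.Ici 0) fun y : ℝ => min y (q * b) :=
    (concaveOn_id (convex_Ici 0)).inf (concaveOn_const _ (convex_Ici 0))
  calc bernExp (fun i => q * p i) (fun c => min (c : ℝ) (q * b))
      ≤ bernExp p (fun c => min (q * c) (q * b)) :=
        bernExp_thinning_le_of_concaveOn hq hp hconcave
    _ = q * bernExp p (fun c => min (c : ℝ) b) := by
        simp only [← mul_min_of_nonneg _ _ hq.1, bernExp_const_mul]

theorem bernoulli_min_expectation_two_le_general {a b : ℝ} (ha : 0 < a) (hab : a ≤ b)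
    (hp : ∀ i, p i ∈ Set.Icc 0 1) :
    1 / a * bernExp (fun i => a / b * p i) (fun c => min (c : ℝ) a) ≤
      1 / b * bernExp p (fun c => min (c : ℝ) b) := by
  have hb : 0 < b := ha.trans_le hab
  have hq : a / b ∈ Set.Icc 0 1 := ⟨by positivity, (div_le_one hb).2 hab⟩
  have hmin := bernExp_thinning_min_le hq hp b
  rw [div_mul_cancel₀ a hb.ne'] at hmin
  calc 1 / a * bernExp (fun i => a / b * p i) (fun c => min (c : ℝ) a)
      ≤ 1 / a * (a / b * bernExp p (fun c => min (c : ℝ) b)) := by gcongr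
    _ = 1 / b * bernExp p (fun c => min (c : ℝ) b) := by field_simp

end

/-- For an integer `m ≥ 2`, independent Bernoulli variables
`x_1, …, x_n` with means `μ_i ∈ [0,1]` and independent Bernoulli variables
`y_1, …, y_n` with means `(2/m)·μ_i`, we have
`(1/2)·E[min(∑ y_i, 2)] ≤ (1/m)·E[min(∑ x_i, m)]`. -/
theorem bernoulli_min_expectation_two_le (n m : ℕ) (hm : 2 ≤ m)
    (μ : Fin n → ℝ) (hμ : ∀ i, 0 ≤ μ i ∧ μ i ≤ 1) :
    (1 / 2 : ℝ) * bernExp (fun i => (2 / (m : ℝ)) * μ i)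
        (fun c => ((min c 2 : ℕ) : ℝ)) ≤
      (1 / (m : ℝ)) * bernExp μ (fun c => ((min c m : ℕ) : ℝ)) := by
  simpa only [Nat.cast_min, Nat.cast_ofNat] using
    bernoulli_min_expectation_two_le_general two_pos (Nat.ofNat_le_cast.2 hm) hμ
end
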